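/- Let I ⊆ E. If closure(J_I) is porous in ℂ, then the upper density of I in E is strictly less than 1; that is, limsup_{R→∞} #(I ∩ B̄_∞(1,R)) / #(E ∩ B̄_∞(1,R)) < 1, where B̄_∞(1,R) = { w ∈ ℂ : max(|Re(w) − 1|, |Im(w)|) ≤ R } and the limsup is taken as R → ∞ over the reals. -/

import Mathlib

/-!
The inversion `z ↦ 1/z` carries `J_I` to the union of the translates `e + J_I`, `e ∈ I`, and
`J_I` lies in the unit disk. If, at some large scale `R`, almost all Gaussian integers of the box
belong to `I`, then `I` is `δR`-dense in the ball of radius `3R/16` about `R/2`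
(`ratio_le_of_hole`, by counting the lattice points of a small square). Inverting, `J_I` is
`O(δ/R)`-dense in a ball of radius `1/(8R)` about one of its own points (`limitSet_dense`), and for
`δ` small compared with the porosity constant this contradicts porosity at the scale `1/(8R)`.
Hence for all large `R` the ratio is at most `1 - δ²/96`.
-/

open Metric Set Filter

/-- `por A x r` is the porosity of the set `A` at the point `x` at scale `r`:
the supremum of all `c ≥ 0` such that some open ball of radius `c·r` is contained
in `B(x,r) ∖ A`. -/
noncomputable def por {X : Type*} [MetricSpace X] (A : Set X) (x : X) (r : ℝ) : ℝ :=
  sSup {c : ℝ | 0 ≤ c ∧ ∃ y : X, Metric.ball y (c * r) ⊆ Metric.ball x r \ A}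

/-- `A` is porous at the point `x`. -/
def PorousAt {X : Type*} [MetricSpace X] (A : Set X) (x : X) : Prop :=
  ∃ c ∈ Set.Ioo (0 : ℝ) 1, ∃ r₀ > (0 : ℝ), ∀ r ∈ Set.Ioo (0 : ℝ) r₀, c ≤ por A x r

/-- `A` is porous. -/
def Porous {X : Type*} [MetricSpace X] (A : Set X) : Prop :=
  ∃ c ∈ Set.Ioo (0 : ℝ) 1, ∃ r₀ > (0 : ℝ), ∀ x ∈ A, ∀ r ∈ Set.Ioo (0 : ℝ) r₀, c ≤ por A x r

/-- The Gaussian integers with positive real part, as a subset of `ℂ`. -/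
def Egauss : Set ℂ :=
  {w | ∃ m n : ℤ, 1 ≤ m ∧ w = (m : ℂ) + (n : ℂ) * Complex.I}

/-- The composition `φ_{ω₀} ∘ ⋯ ∘ φ_{ω_{m-1}}` of the continued fraction maps
`φ_e z = 1/(e+z)`. -/
noncomputable def cfComp (ω : ℕ → ℂ) (m : ℕ) : ℂ → ℂ :=
  (List.ofFn fun i : Fin m => ω i).foldr (fun e g => (fun z => (e + z)⁻¹) ∘ g) id

/-- The limit set of the complex continued fraction system with alphabet `I ⊆ ℂ`. -/
def cfLimitSet (I : Set ℂ) : Set ℂ :=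
  {z | ∃ ω : ℕ → ℂ, (∀ k, ω k ∈ I) ∧
    Filter.Tendsto (fun m => cfComp ω m 0) Filter.atTop (nhds z)}

/-- The closed sup-norm ball `B̄_∞(1,R) = {w : max(|Re w − 1|, |Im w|) ≤ R}` in `ℂ`. -/
def boxAtOne (R : ℝ) : Set ℂ := {w | max |w.re - 1| |w.im| ≤ R}

/-! ### The limit set -/

lemma cfComp_succ (ω : ℕ → ℂ) (m : ℕ) (z : ℂ) :
    cfComp ω (m + 1) z = (ω 0 + cfComp (fun k => ω (k + 1)) m z)⁻¹ := by
  simp [cfComp, List.ofFn_succ]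

lemma one_le_re_of_mem {e : ℂ} (he : e ∈ Egauss) : 1 ≤ e.re := by
  obtain ⟨m, n, hm, rfl⟩ := he
  simp
  exact_mod_cast hm

lemma inv_add_bounds {e z : ℂ} (he : 1 ≤ e.re) (hz : 0 ≤ z.re) :
    0 ≤ ((e + z)⁻¹).re ∧ ‖(e + z)⁻¹‖ ≤ 1 := by
  have h1 : 1 ≤ (e + z).re := by simp; linarith
  constructor
  · rw [Complex.inv_re]
    exact div_nonneg (by linarith) (Complex.normSq_nonneg _)
  · rw [norm_inv]
    exact inv_le_one_of_one_le₀ (h1.trans ((le_abs_self _).trans (Complex.abs_re_le_norm _)))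

lemma cfComp_bounds (m : ℕ) (ω : ℕ → ℂ) (hω : ∀ k, ω k ∈ Egauss) :
    0 ≤ (cfComp ω m 0).re ∧ ‖cfComp ω m 0‖ ≤ 1 := by
  induction m generalizing ω with
  | zero => simp [cfComp]
  | succ m ih =>
    rw [cfComp_succ]
    exact inv_add_bounds (one_le_re_of_mem (hω 0)) (ih _ fun k => hω (k + 1)).1

lemma limitSet_bounds {I : Set ℂ} (hI : I ⊆ Egauss) {z : ℂ} (hz : z ∈ cfLimitSet I) :
    0 ≤ z.re ∧ ‖z‖ ≤ 1 := by
  obtain ⟨ω, hω, ht⟩ := hz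
  have hb := fun m => cfComp_bounds m ω fun k => hI (hω k)
  exact ⟨ge_of_tendsto' ((Complex.continuous_re.tendsto z).comp ht) fun m => (hb m).1,
    le_of_tendsto' ht.norm fun m => (hb m).2⟩

lemma inv_mem_limitSet {I : Set ℂ} (hI : I ⊆ Egauss) {e z : ℂ} (he : e ∈ I)
    (hz : z ∈ cfLimitSet I) : (e + z)⁻¹ ∈ cfLimitSet I := by
  have hb := limitSet_bounds hI hz
  have h1 := one_le_re_of_mem (hI he)
  obtain ⟨ω, hω, ht⟩ := hz
  have h0 : e + z ≠ 0 := fun h => by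
    have := congrArg Complex.re h
    simp at this
    linarith
  refine ⟨fun k => Nat.casesOn k e ω, fun k => ?_, ?_⟩
  · cases k with
    | zero => exact he
    | succ k => exact hω k
  · rw [← tendsto_add_atTop_iff_nat 1]
    simp only [cfComp_succ]
    exact (tendsto_const_nhds.add ht).inv₀ h0

/-- If `Re e ≥ 2` then `z ↦ 1/(e+z)` contracts the right half-plane by the factor `1/4`, so the
constant sequence `e, e, …` defines a point of the limit set. -/
lemma limitSet_nonempty {I : Set ℂ} (hI : I ⊆ Egauss) {e : ℂ} (he : e ∈ I) (h2 : 2 ≤ e.re) :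
    (cfLimitSet I).Nonempty := by
  set u : ℕ → ℂ := fun m => cfComp (fun _ => e) m 0 with hu
  have hs : ∀ m, u (m + 1) = (e + u m)⁻¹ := fun m => cfComp_succ _ _ _
  have hb : ∀ m, 0 ≤ (u m).re := fun m => (cfComp_bounds m _ fun _ => hI he).1
  have hn : ∀ m, 2 ≤ ‖e + u m‖ := fun m => by
    have h3 : 2 ≤ (e + u m).re := by simp; linarith [hb m]
    exact h3.trans ((le_abs_self _).trans (Complex.abs_re_le_norm _))
  have hd : ∀ m, dist (u m) (u (m + 1)) ≤ 1 * (1 / 4 : ℝ) ^ m := by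
    intro m
    induction m with
    | zero =>
      have h0 : u 0 = 0 := by simp [hu, cfComp]
      rw [h0, dist_zero_left]
      simpa using (cfComp_bounds 1 (fun _ => e) fun _ => hI he).2
    | succ m ih =>
      have a0 : e + u m ≠ 0 := norm_pos_iff.1 (by linarith [hn m])
      have b0 : e + u (m + 1) ≠ 0 := norm_pos_iff.1 (by linarith [hn (m + 1)])
      have hdiff : u (m + 1) - u (m + 1 + 1) = (e + u m)⁻¹ - (e + u (m + 1))⁻¹ := by
        rw [← hs, ← hs]
      rw [dist_eq_norm, hdiff, inv_sub_inv a0 b0, norm_div, norm_mul]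
      rw [dist_comm, dist_eq_norm] at ih
      have : e + u (m + 1) - (e + u m) = u (m + 1) - u m := by ring
      rw [this, div_le_iff₀ (by have := hn m; have := hn (m + 1); positivity)]
      have h4 : 4 ≤ ‖e + u m‖ * ‖e + u (m + 1)‖ := by nlinarith [hn m, hn (m + 1)]
      calc _ ≤ _ := ih
        _ = 1 * (1 / 4 : ℝ) ^ (m + 1) * 4 := by ring
        _ ≤ _ := by gcongr
  obtain ⟨z, hz⟩ := cauchySeq_tendsto_of_complete
    (cauchySeq_of_le_geometric (1 / 4 : ℝ) 1 (by norm_num) hd)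
  exact ⟨z, fun _ => e, fun _ => he, hz⟩

/-! ### Counting lattice points -/

lemma gauss_box_finite_card {R : ℝ} (hR : 1 ≤ R) :
    (Egauss ∩ boxAtOne R).Finite ∧ ((Egauss ∩ boxAtOne R).ncard : ℝ) ≤ 6 * R ^ 2 := by
  set F : Finset (ℤ × ℤ) := Finset.Icc 1 (⌊R⌋ + 1) ×ˢ Finset.Icc (-⌊R⌋) ⌊R⌋ with hF
  set G : Finset ℂ := F.image fun q => (q.1 : ℂ) + (q.2 : ℂ) * Complex.I with hG
  have hsub : Egauss ∩ boxAtOne R ⊆ (G : Set ℂ) := by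
    rintro w ⟨⟨m, n, hm, rfl⟩, hw⟩
    simp only [boxAtOne, mem_ofPred_eq, max_le_iff, abs_le] at hw
    simp at hw
    obtain ⟨⟨_, h2⟩, h3, h4⟩ := hw
    rw [hG, Finset.coe_image]
    refine ⟨(m, n), ?_, rfl⟩
    have h5 : m - 1 ≤ ⌊R⌋ := Int.le_floor.2 (by push_cast; linarith)
    have h6 : n ≤ ⌊R⌋ := Int.le_floor.2 h4
    have h7 : -n ≤ ⌊R⌋ := Int.le_floor.2 (by push_cast; linarith)
    simp only [hF, Finset.coe_product, Finset.coe_Icc, mem_prod, mem_Icc]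
    omega
  refine ⟨G.finite_toSet.subset hsub, ?_⟩
  have h1 : (Egauss ∩ boxAtOne R).ncard ≤ F.card := by
    refine (Set.ncard_le_ncard hsub G.finite_toSet).trans ?_
    rw [Set.ncard_coe_finset]
    exact Finset.card_image_le
  have hfl : (1 : ℤ) ≤ ⌊R⌋ := Int.le_floor.2 (by simpa using hR)
  have h2 : ((F.card : ℤ)) = (⌊R⌋ + 1) * (2 * ⌊R⌋ + 1) := by
    rw [hF, Finset.card_product, Int.card_Icc, Int.card_Icc]
    push_cast
    rw [Int.toNat_of_nonneg (by omega), Int.toNat_of_nonneg (by omega)]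
    ring
  have h3 : (F.card : ℝ) = (⌊R⌋ + 1) * (2 * ⌊R⌋ + 1) := by exact_mod_cast h2
  have h4 : (⌊R⌋ : ℝ) ≤ R := Int.floor_le R
  have h5 : (1 : ℝ) ≤ ⌊R⌋ := by exact_mod_cast hfl
  calc ((Egauss ∩ boxAtOne R).ncard : ℝ) ≤ F.card := by exact_mod_cast h1
    _ = (⌊R⌋ + 1) * (2 * ⌊R⌋ + 1) := h3
    _ ≤ 6 * R ^ 2 := by nlinarith

/-- A ball of radius `δR` free of points of `I`, well inside the box of size `R`, contains a square
with at least `(δR/4)²` lattice points, while the box has at most `6R²` of them. -/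
lemma ratio_le_of_hole {I : Set ℂ} (hI : I ⊆ Egauss) {δ R : ℝ} (hδ : δ ≤ 1 / 8)
    (hR : 4 ≤ δ * R) (hR1 : 32 ≤ R) {p : ℂ} (hp : ‖p - (R / 2 : ℝ)‖ ≤ 3 * R / 16)
    (hole : ∀ e ∈ I, δ * R < ‖e - p‖) :
    ((I ∩ boxAtOne R).ncard : ℝ) / ((Egauss ∩ boxAtOne R).ncard : ℝ) ≤ 1 - δ ^ 2 / 96 := by
  obtain ⟨hfin, hcard⟩ := gauss_box_finite_card (R := R) (by linarith)
  have hpre := (Complex.abs_re_le_norm _).trans hp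
  have hpim := (Complex.abs_im_le_norm _).trans hp
  simp only [Complex.sub_re, Complex.sub_im, Complex.ofReal_re, Complex.ofReal_im, sub_zero,
    abs_le] at hpre hpim
  set N := ⌈δ * R / 4⌉₊ with hN
  have hN1 : δ * R / 4 ≤ N := Nat.le_ceil _
  have hN2 : (N : ℝ) < δ * R / 4 + 1 := Nat.ceil_lt_add_one (by linarith)
  have hδR : δ * R ≤ R / 8 := by nlinarith
  set f : ℕ × ℕ → ℂ := fun q =>
    ((⌈p.re⌉ + q.1 : ℤ) : ℂ) + ((⌈p.im⌉ + q.2 : ℤ) : ℂ) * Complex.I with hf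
  have hre : ∀ q, (f q).re = ⌈p.re⌉ + q.1 := fun q => by simp [hf]
  have him : ∀ q, (f q).im = ⌈p.im⌉ + q.2 := fun q => by simp [hf]
  set H : Finset ℂ := (Finset.range N ×ˢ Finset.range N).image f with hH
  have hHcard : H.card = N * N := by
    rw [hH, Finset.card_image_of_injective, Finset.card_product, Finset.card_range]
    intro q q' h
    have h1 := congrArg Complex.re h
    have h2 := congrArg Complex.im h
    rw [hre, hre] at h1
    rw [him, him] at h2
    ext
    · exact_mod_cast add_left_cancel h1
    · exact_mod_cast add_left_cancel h2
  have key : ∀ w ∈ H, w ∈ Egauss ∩ boxAtOne R ∧ ‖w - p‖ ≤ δ * R := by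
    intro w hw
    rw [hH, Finset.mem_image] at hw
    obtain ⟨⟨i, j⟩, hij, rfl⟩ := hw
    simp only [Finset.mem_product, Finset.mem_range] at hij
    have hi : (i : ℝ) + 1 ≤ N := by exact_mod_cast hij.1
    have hj : (j : ℝ) + 1 ≤ N := by exact_mod_cast hij.2
    have hi0 : (0 : ℝ) ≤ i := i.cast_nonneg
    have hj0 : (0 : ℝ) ≤ j := j.cast_nonneg
    have c1 := Int.le_ceil p.re
    have c2 := Int.ceil_lt_add_one p.re
    have c3 := Int.le_ceil p.im
    have c4 := Int.ceil_lt_add_one p.im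
    refine ⟨⟨⟨_, _, ?_, rfl⟩, ?_⟩, ?_⟩
    · have : (1 : ℝ) ≤ ((⌈p.re⌉ + i : ℤ) : ℝ) := by push_cast; linarith
      exact_mod_cast this
    · simp only [boxAtOne, mem_ofPred_eq, max_le_iff, abs_le, hre, him]
      refine ⟨⟨?_, ?_⟩, ?_, ?_⟩ <;> linarith
    · refine (Complex.norm_le_abs_re_add_abs_im _).trans ?_
      rw [Complex.sub_re, Complex.sub_im, hre, him, abs_of_nonneg, abs_of_nonneg] <;>
        dsimp only <;> linarith
  have hdisj : Disjoint (I ∩ boxAtOne R) (H : Set ℂ) := by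
    rw [Set.disjoint_left]
    intro w hw hwH
    exact absurd (key w hwH).2 (not_le.2 (hole w hw.1))
  have hIfin : (I ∩ boxAtOne R).Finite := hfin.subset (inter_subset_inter_left _ hI)
  have hle : (I ∩ boxAtOne R).ncard + N * N ≤ (Egauss ∩ boxAtOne R).ncard := by
    rw [← hHcard, ← Set.ncard_coe_finset H, ← Set.ncard_union_eq hdisj hIfin H.finite_toSet]
    exact Set.ncard_le_ncard
      (union_subset (inter_subset_inter_left _ hI) fun w hw => (key w hw).1) hfin
  have hle' : ((I ∩ boxAtOne R).ncard : ℝ) + N * N ≤ ((Egauss ∩ boxAtOne R).ncard : ℝ) := by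
    exact_mod_cast hle
  have hNN : (δ * R / 4) ^ 2 ≤ N * N := by nlinarith
  have hT : (0 : ℝ) < ((Egauss ∩ boxAtOne R).ncard : ℝ) := by
    have : (0 : ℝ) ≤ ((I ∩ boxAtOne R).ncard : ℝ) := Nat.cast_nonneg _
    nlinarith
  rw [div_le_iff₀ hT]
  nlinarith [mul_le_mul_of_nonneg_left hcard (sq_nonneg δ)]

/-! ### Transfer by inversion -/

/-- Density of `I` at scale `R` gives density of the limit set near the point `x`, at scale
`1/(8R)`. -/
lemma limitSet_dense {I : Set ℂ} (hI : I ⊆ Egauss) {δ R : ℝ} (hδ0 : 0 < δ) (hδ : δ ≤ 1 / 400)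
    (hR : 4 ≤ δ * R) (hR1 : 1600 ≤ R)
    (hd : ∀ p : ℂ, ‖p - (R / 2 : ℝ)‖ ≤ 3 * R / 16 → ∃ e ∈ I, ‖e - p‖ ≤ δ * R) :
    ∃ x ∈ cfLimitSet I, ∀ y : ℂ, dist y x < 1 / (8 * R) →
      ∃ x' ∈ cfLimitSet I, dist x' y ≤ 24 * δ / R := by
  have hδR : δ * R ≤ R / 400 := by nlinarith
  have hRpos : 0 < R := by linarith
  have hhalf : ‖((R / 2 : ℝ) : ℂ)‖ = R / 2 := by
    rw [Complex.norm_real, Real.norm_of_nonneg (by linarith)]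
  obtain ⟨e₀, he₀, hclose⟩ := hd ((R / 2 : ℝ) : ℂ) (by simp; linarith)
  have hre : 2 ≤ e₀.re := by
    have h := (Complex.abs_re_le_norm _).trans hclose
    simp only [Complex.sub_re, Complex.ofReal_re, abs_le] at h
    linarith
  obtain ⟨ζ, hζ⟩ := limitSet_nonempty hI he₀ hre
  have hζ1 := (limitSet_bounds hI hζ).2
  refine ⟨(e₀ + ζ)⁻¹, inv_mem_limitSet hI he₀ hζ, fun y hy => ?_⟩
  set w := e₀ + ζ with hw
  have hwc : ‖w - (R / 2 : ℝ)‖ ≤ R / 8 := by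
    have : w - (R / 2 : ℝ) = (e₀ - (R / 2 : ℝ)) + ζ := by rw [hw]; ring
    rw [this]
    exact (norm_add_le _ _).trans (by linarith)
  have hwu : ‖w‖ ≤ 5 * R / 8 := by
    have := norm_le_norm_add_norm_sub' w ((R / 2 : ℝ) : ℂ)
    linarith
  have hwl : 3 * R / 8 ≤ ‖w‖ := by
    have := norm_sub_norm_le ((R / 2 : ℝ) : ℂ) w
    rw [norm_sub_rev] at this
    linarith
  have hw0 : w ≠ 0 := norm_pos_iff.1 (by linarith)
  have hxl : 8 / 5 / R ≤ ‖w⁻¹‖ := by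
    rw [norm_inv, div_le_iff₀ hRpos, inv_mul_eq_div, le_div_iff₀ (by linarith)]
    linarith
  have hxu : ‖w⁻¹‖ ≤ 8 / 3 / R := by
    rw [norm_inv, le_div_iff₀ hRpos, inv_mul_eq_div, div_le_iff₀ (by linarith)]
    linarith
  rw [dist_eq_norm] at hy
  have hr : 1 / (8 * R) = 1 / 8 / R := by field_simp
  rw [hr] at hy
  have hyl : 5 / 4 / R ≤ ‖y‖ := by
    have h1 := norm_sub_norm_le w⁻¹ y
    rw [norm_sub_rev] at h1
    have h2 : 5 / 4 / R + 1 / 8 / R ≤ 8 / 5 / R := by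
      rw [← add_div]; gcongr; norm_num
    linarith
  have hyu : ‖y‖ ≤ 3 / R := by
    have h1 := norm_sub_norm_le y w⁻¹
    have h2 : 8 / 3 / R + 1 / 8 / R ≤ 3 / R := by
      rw [← add_div]; gcongr; norm_num
    linarith
  have hy0' : 0 < ‖y‖ := lt_of_lt_of_le (by positivity) hyl
  have hy0 : y ≠ 0 := norm_pos_iff.1 hy0'
  have hpw : ‖y⁻¹ - (R / 2 : ℝ)‖ ≤ 3 * R / 16 := by
    have h1 : ‖y⁻¹ - w‖ ≤ R / 16 := by
      have h2 : y⁻¹ - w = -((y - w⁻¹) * w / y) := by field_simp; ring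
      rw [h2, norm_neg, norm_div, norm_mul, div_le_iff₀ hy0']
      calc ‖y - w⁻¹‖ * ‖w‖ ≤ 1 / 8 / R * (5 * R / 8) := by gcongr
        _ = 5 / 64 := by field_simp; norm_num
        _ = R / 16 * (5 / 4 / R) := by field_simp; norm_num
        _ ≤ _ := by gcongr
    have h3 : y⁻¹ - (R / 2 : ℝ) = (y⁻¹ - w) + (w - (R / 2 : ℝ)) := by ring
    rw [h3]
    exact (norm_add_le _ _).trans (by linarith)
  obtain ⟨e, he, hep⟩ := hd y⁻¹ hpw
  refine ⟨(e + ζ)⁻¹, inv_mem_limitSet hI he hζ, ?_⟩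
  have hev : ‖e + ζ - y⁻¹‖ ≤ 2 * δ * R := by
    have : e + ζ - y⁻¹ = (e - y⁻¹) + ζ := by ring
    rw [this]
    exact (norm_add_le _ _).trans (by linarith)
  have hel : R / 4 ≤ ‖e + ζ‖ := by
    have h1 := norm_sub_norm_le ((R / 2 : ℝ) : ℂ) (e + ζ)
    have h2 : ((R / 2 : ℝ) : ℂ) - (e + ζ) = -((e + ζ - y⁻¹) + (y⁻¹ - (R / 2 : ℝ))) := by ring
    rw [h2, norm_neg] at h1
    have h3 := norm_add_le (e + ζ - y⁻¹) (y⁻¹ - ((R / 2 : ℝ) : ℂ))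
    linarith
  have he0 : e + ζ ≠ 0 := norm_pos_iff.1 (by linarith)
  have h1 : (e + ζ)⁻¹ - y = -((e + ζ - y⁻¹) * y / (e + ζ)) := by field_simp; ring
  rw [dist_eq_norm, h1, norm_neg, norm_div, norm_mul, div_le_iff₀ (by linarith)]
  calc ‖e + ζ - y⁻¹‖ * ‖y‖ ≤ 2 * δ * R * (3 / R) := by gcongr
    _ = 24 * δ / R * (R / 4) := by field_simp; ring
    _ ≤ _ := by gcongr

/-- If the closure of `J_I` is porous in `ℂ` then the upper density of
`I` in `E` is strictly less than `1`. -/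
theorem stmt14 (I : Set ℂ) (hIE : I ⊆ Egauss)
    (hpor : Porous (closure (cfLimitSet I))) :
    Filter.limsup
      (fun R : ℝ =>
        ((I ∩ boxAtOne R).ncard : ℝ) / ((Egauss ∩ boxAtOne R).ncard : ℝ))
      Filter.atTop < 1 := by
  obtain ⟨c, ⟨hc0, hc1⟩, r₀, hr₀, hc⟩ := hpor
  set δ := c / 400 with hδ
  have hδ0 : 0 < δ := by positivity
  have hbound : ∀ᶠ R : ℝ in atTop,
      ((I ∩ boxAtOne R).ncard : ℝ) / ((Egauss ∩ boxAtOne R).ncard : ℝ) ≤ 1 - δ ^ 2 / 96 := by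
    filter_upwards [eventually_ge_atTop 1600, eventually_ge_atTop (4 / δ),
      eventually_gt_atTop (1 / (8 * r₀))] with R hR1 hR2 hR3
    have hRpos : 0 < R := by linarith
    have hR4 : 4 ≤ δ * R := by rwa [div_le_iff₀' hδ0] at hR2
    by_contra hcon
    have hd : ∀ p : ℂ, ‖p - (R / 2 : ℝ)‖ ≤ 3 * R / 16 → ∃ e ∈ I, ‖e - p‖ ≤ δ * R := by
      intro p hp
      by_contra! hole
      exact hcon (ratio_le_of_hole hIE (by linarith) hR4 (by linarith) hp hole)
    obtain ⟨x, hx, hdense⟩ := limitSet_dense hIE hδ0 (by linarith) hR4 hR1 hd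
    have hrpos : 0 < 1 / (8 * R) := by positivity
    have hrlt : 1 / (8 * R) < r₀ := by
      rw [div_lt_iff₀ (by positivity)] at hR3 ⊢
      linarith
    have hpor := hc x (subset_closure hx) _ ⟨hrpos, hrlt⟩
    -- The supremum need not be attained, so the hole is taken with a constant above `24c/25`.
    have hlt : 24 / 25 * c < por (closure (cfLimitSet I)) x (1 / (8 * R)) := by linarith
    rw [por] at hlt
    have hne : {c' : ℝ | 0 ≤ c' ∧ ∃ y : ℂ, Metric.ball y (c' * (1 / (8 * R))) ⊆
        Metric.ball x (1 / (8 * R)) \ closure (cfLimitSet I)}.Nonempty := by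
      by_contra h
      rw [not_nonempty_iff_eq_empty] at h
      rw [h, Real.sSup_empty] at hlt
      linarith
    obtain ⟨c', ⟨_, y, hy⟩, hcc'⟩ := exists_lt_of_lt_csSup hne hlt
    have hc'0 : 0 < c' := by linarith
    have hyx := (hy (Metric.mem_ball_self (by positivity))).1
    obtain ⟨x', hx', hx'y⟩ := hdense y hyx
    refine (hy (?_ : x' ∈ _)).2 (subset_closure hx')
    rw [Metric.mem_ball]
    refine hx'y.trans_lt ?_
    rw [mul_one_div, div_lt_div_iff₀ hRpos (by positivity)]
    nlinarith
  refine lt_of_le_of_lt (limsup_le_of_le ?_ hbound) ?_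
  · exact isCoboundedUnder_le_of_le atTop (x := 0) fun R => by positivity
  · have : 0 < δ ^ 2 := by positivity
    linarith
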